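/- Let K ⊂ ℝⁿ be an isotropic unconditional convex body. Then K ⊆ (√6/2)·n·B₁ⁿ, and consequently for any convex body L ⊆ K with 0 ∈ L, (1/|L|) ∫_L ‖x‖₁ dx ≤ (√6/2)·n. -/

import Mathlib

open MeasureTheory

section PL

lemma level_le {R a b : ℝ} (ha : 0 < a) (hb : 0 < b) (hab : a + b = 1)
    {f g h : ℝ → ℝ} {r : ℝ} (hr : 0 < r)
    (hR : 0 ≤ R)
    (f0 : r < f 0) (g0 : r < g 0)
    (hf : AntitoneOn f (Set.Icc 0 R)) (hg : AntitoneOn g (Set.Icc 0 R))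
    (H : ∀ x ∈ Set.Icc 0 R, ∀ y ∈ Set.Icc 0 R, f x ^ a * g y ^ b ≤ h (a * x + b * y)) :
    ENNReal.ofReal a * volume.restrict (Set.Icc 0 R) {x | r < f x}
      + ENNReal.ofReal b * volume.restrict (Set.Icc 0 R) {x | r < g x}
      ≤ volume.restrict (Set.Icc 0 R) {x | r < h x} := by
  have key : ∀ f : ℝ → ℝ, r < f 0 → AntitoneOn f (Set.Icc 0 R) → ∃ p, 0 ≤ p ∧ p ≤ R ∧
      volume.restrict (Set.Icc 0 R) {x | r < f x} ≤ ENNReal.ofReal p ∧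
      ∀ θ, 0 ≤ θ → θ < 1 → r < f (θ * p) := by
    intro f f0 hf
    set T : Set ℝ := {x | r < f x} ∩ Set.Icc 0 R with hT
    have h0T : (0:ℝ) ∈ T := ⟨f0, le_refl _, hR⟩
    have hbdd : BddAbove T := ⟨R, fun x hx => hx.2.2⟩
    have hp0 : 0 ≤ sSup T := le_csSup hbdd h0T
    have hpR : sSup T ≤ R := csSup_le ⟨0, h0T⟩ (fun x hx => hx.2.2)
    refine ⟨sSup T, hp0, hpR, ?_, ?_⟩
    · rw [Measure.restrict_apply' measurableSet_Icc]
      calc volume T ≤ volume (Set.Icc 0 (sSup T)) :=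
            measure_mono (fun x hx => ⟨hx.2.1, le_csSup hbdd hx⟩)
        _ = _ := by simp
    · intro θ h0 h1
      rcases hp0.eq_or_lt with hp | hp
      · rw [← hp]; simpa using f0
      · have : θ * sSup T < sSup T := by nlinarith
        obtain ⟨x, hx, hlt⟩ := exists_lt_of_lt_csSup ⟨0, h0T⟩ this
        have : f x ≤ f (θ * sSup T) := hf ⟨by positivity, by linarith⟩ hx.2 hlt.le
        exact lt_of_lt_of_le hx.1 this
  obtain ⟨p, hp0, hpR, hp, hpf⟩ := key f f0 hf
  obtain ⟨q, hq0, hqR, hq, hqg⟩ := key g g0 hg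
  have : Set.Ico 0 (a * p + b * q) ⊆ {x | r < h x} ∩ Set.Icc 0 R := by
    intro z hz
    have hd : 0 < a * p + b * q := lt_of_le_of_lt hz.1 hz.2
    set θ := z / (a * p + b * q) with hθ
    have hθ0 : 0 ≤ θ := div_nonneg hz.1 hd.le
    have hθ1 : θ < 1 := (div_lt_one hd).2 hz.2
    have hzz : z = a * (θ * p) + b * (θ * q) := by
      rw [hθ]; field_simp
    have h1 := hpf θ hθ0 hθ1
    have h2 := hqg θ hθ0 hθ1
    refine ⟨?_, hz.1, ?_⟩
    · have := H (θ * p) ⟨by positivity, by nlinarith⟩ (θ * q) ⟨by positivity, by nlinarith⟩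
      rw [← hzz] at this
      refine lt_of_lt_of_le ?_ this
      calc r = r ^ a * r ^ b := by rw [← Real.rpow_add hr, hab, Real.rpow_one]
        _ < _ := by
          apply mul_lt_mul'' (Real.rpow_lt_rpow hr.le h1 ha) (Real.rpow_lt_rpow hr.le h2 hb)
            <;> positivity
    · nlinarith [hz.2]
  calc _ ≤ ENNReal.ofReal a * ENNReal.ofReal p + ENNReal.ofReal b * ENNReal.ofReal q := by gcongr
    _ = volume (Set.Ico 0 (a * p + b * q)) := by
      rw [← ENNReal.ofReal_mul ha.le, ← ENNReal.ofReal_mul hb.le,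
        ← ENNReal.ofReal_add (by positivity) (by positivity)]; simp
    _ ≤ _ := by
      rw [Measure.restrict_apply' measurableSet_Icc]
      exact measure_mono this

lemma amgm_ennreal {a b : ℝ} (ha : 0 < a) (hb : 0 < b) (hab : a + b = 1) {x y : ENNReal}
    (hx : x ≠ ⊤) (hy : y ≠ ⊤) :
    x ^ a * y ^ b ≤ ENNReal.ofReal a * x + ENNReal.ofReal b * y := by
  lift x to NNReal using hx
  lift y to NNReal using hy
  have := NNReal.geom_mean_le_arith_mean2_weighted (Real.toNNReal a) (Real.toNNReal b) x y
    (by rw [← Real.toNNReal_add ha.le hb.le, hab]; simp)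
  rw [Real.coe_toNNReal _ ha.le, Real.coe_toNNReal _ hb.le] at this
  rw [← ENNReal.coe_rpow_of_nonneg _ ha.le, ← ENNReal.coe_rpow_of_nonneg _ hb.le]
  unfold ENNReal.ofReal
  exact_mod_cast this

lemma pl1_norm {R a b : ℝ} (ha : 0 < a) (hb : 0 < b) (hab : a + b = 1)
    {f g h : ℝ → ℝ} (hR : 0 ≤ R)
    (mf : Measurable f) (mg : Measurable g) (mh : Measurable h)
    (nf : ∀ x, 0 ≤ f x) (ng : ∀ x, 0 ≤ g x) (nh : ∀ x, 0 ≤ h x)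
    (f0 : f 0 = 1) (g0 : g 0 = 1)
    (hf : AntitoneOn f (Set.Icc 0 R)) (hg : AntitoneOn g (Set.Icc 0 R))
    (H : ∀ x ∈ Set.Icc 0 R, ∀ y ∈ Set.Icc 0 R, f x ^ a * g y ^ b ≤ h (a * x + b * y)) :
    (∫⁻ x in Set.Icc 0 R, ENNReal.ofReal (f x)) ^ a
      * (∫⁻ x in Set.Icc 0 R, ENNReal.ofReal (g x)) ^ b
      ≤ ∫⁻ x in Set.Icc 0 R, ENNReal.ofReal (h x) := by
  have fin : ∀ f : ℝ → ℝ, f 0 = 1 → AntitoneOn f (Set.Icc 0 R) →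
      ∫⁻ x in Set.Icc 0 R, ENNReal.ofReal (f x) ≠ ⊤ := by
    intro f f0 hf
    have : ∫⁻ x in Set.Icc 0 R, ENNReal.ofReal (f x) ≤ ∫⁻ x in Set.Icc 0 R, 1 := by
      apply setLIntegral_mono' measurableSet_Icc
      intro x hx
      have := hf (Set.left_mem_Icc.2 hR) hx hx.1
      rw [f0] at this
      simpa using this
    refine ne_top_of_le_ne_top ?_ this
    simp
  refine (amgm_ennreal ha hb hab (fin f f0 hf) (fin g g0 hg)).trans ?_
  rw [lintegral_eq_lintegral_meas_lt _ (ae_of_all _ nf) mf.aemeasurable,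
    lintegral_eq_lintegral_meas_lt _ (ae_of_all _ ng) mg.aemeasurable,
    lintegral_eq_lintegral_meas_lt _ (ae_of_all _ nh) mh.aemeasurable]
  have mm : ∀ f : ℝ → ℝ, Measurable fun t => volume.restrict (Set.Icc 0 R) {x | t < f x} := by
    intro f
    apply Antitone.measurable
    intro s t hst
    exact measure_mono (fun x (hx : t < f x) => lt_of_le_of_lt hst hx)
  rw [← lintegral_const_mul _ (mm f), ← lintegral_const_mul _ (mm g), ← lintegral_add_left
    ((mm f).const_mul _)]
  apply setLIntegral_mono' measurableSet_Ioi
  intro r hr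
  rcases lt_or_ge r 1 with h1 | h1
  · exact level_le ha hb hab hr hR (by rwa [f0]) (by rwa [g0]) hf hg H
  · have z : ∀ f : ℝ → ℝ, f 0 = 1 → AntitoneOn f (Set.Icc 0 R) →
        volume.restrict (Set.Icc 0 R) {x | r < f x} = 0 := by
      intro f f0 hf
      rw [Measure.restrict_apply' measurableSet_Icc]
      convert measure_empty (μ := volume)
      ext x
      simp only [Set.mem_inter_iff, Set.mem_ofPred_eq, Set.mem_empty_iff_false, iff_false, not_and]
      intro h hx
      have := hf (Set.left_mem_Icc.2 hR) hx hx.1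
      linarith
    rw [z f f0 hf, z g g0 hg]; simp

lemma pl1 {R a b : ℝ} (ha : 0 < a) (hb : 0 < b) (hab : a + b = 1)
    {f g h : ℝ → ENNReal} (hR : 0 ≤ R)
    (mf : Measurable f) (mg : Measurable g) (mh : Measurable h)
    (f0 : f 0 ≠ ⊤) (g0 : g 0 ≠ ⊤)
    (hf : AntitoneOn f (Set.Icc 0 R)) (hg : AntitoneOn g (Set.Icc 0 R))
    (H : ∀ x ∈ Set.Icc 0 R, ∀ y ∈ Set.Icc 0 R, f x ^ a * g y ^ b ≤ h (a * x + b * y)) :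
    (∫⁻ x in Set.Icc 0 R, f x) ^ a * (∫⁻ x in Set.Icc 0 R, g x) ^ b
      ≤ ∫⁻ x in Set.Icc 0 R, h x := by
  have zz : ∀ f : ℝ → ENNReal, f 0 = 0 → AntitoneOn f (Set.Icc 0 R) →
      ∫⁻ x in Set.Icc 0 R, f x = 0 := by
    intro f f0 hf
    rw [← nonpos_iff_eq_zero]
    calc _ ≤ ∫⁻ x in Set.Icc 0 R, 0 := by
          apply setLIntegral_mono' measurableSet_Icc
          intro x hx
          have := hf (Set.left_mem_Icc.2 hR) hx hx.1
          rwa [f0] at this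
      _ = 0 := by simp
  by_cases fz : f 0 = 0
  · rw [zz f fz hf]; simp [ENNReal.zero_rpow_of_pos ha]
  by_cases gz : g 0 = 0
  · rw [zz g gz hg]; simp [ENNReal.zero_rpow_of_pos hb]
  set A := f 0 with hA
  set B := g 0 with hB
  set C := A ^ a * B ^ b with hC
  have C0 : C ≠ 0 := by
    rw [hC]; exact mul_ne_zero (by simp [ENNReal.rpow_eq_zero_iff, fz, f0])
      (by simp [ENNReal.rpow_eq_zero_iff, gz, g0])
  have Ct : C ≠ ⊤ := ENNReal.mul_ne_top (ENNReal.rpow_ne_top_of_nonneg ha.le f0)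
    (ENNReal.rpow_ne_top_of_nonneg hb.le g0)
  have le1 : ∀ f : ℝ → ENNReal, f 0 ≠ 0 → f 0 ≠ ⊤ → AntitoneOn f (Set.Icc 0 R) →
      ∀ x ∈ Set.Icc 0 R, f x / f 0 ≤ 1 := by
    intro f h1 h2 hf x hx
    have := hf (Set.left_mem_Icc.2 hR) hx hx.1
    exact ENNReal.div_le_of_le_mul (by simpa using this)
  have anti : ∀ f : ℝ → ENNReal, f 0 ≠ 0 → f 0 ≠ ⊤ → AntitoneOn f (Set.Icc 0 R) →
      AntitoneOn (fun x => (f x / f 0).toReal) (Set.Icc 0 R) := by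
    intro f h1 h2 hf x hx y hy hxy
    refine ENNReal.toReal_mono (ne_top_of_le_ne_top (by simp) (le1 f h1 h2 hf x hx)) ?_
    have := hf hx hy hxy
    gcongr
  have main := pl1_norm (R := R) (f := fun x => (f x / A).toReal) (g := fun x => (g x / B).toReal)
    (h := fun x => (min (h x / C) 1).toReal) ha hb hab hR
    (by fun_prop) (by fun_prop) (by fun_prop)
    (fun _ => ENNReal.toReal_nonneg) (fun _ => ENNReal.toReal_nonneg)
    (fun _ => ENNReal.toReal_nonneg)
    (by simp only [← hA]; rw [ENNReal.div_self fz f0]; simp)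
    (by simp only [← hB]; rw [ENNReal.div_self gz g0]; simp)
    (anti f fz f0 hf) (anti g gz g0 hg) ?_
  · have conv : ∀ f : ℝ → ENNReal, f 0 ≠ 0 → f 0 ≠ ⊤ → Measurable f → AntitoneOn f (Set.Icc 0 R) →
        ∫⁻ x in Set.Icc 0 R, f x = f 0 * ∫⁻ x in Set.Icc 0 R, ENNReal.ofReal (f x / f 0).toReal := by
      intro f h1 h2 mf hf
      rw [← lintegral_const_mul _ (by fun_prop)]
      apply setLIntegral_congr_fun measurableSet_Icc
      intro x hx
      simp only
      rw [ENNReal.ofReal_toReal (ne_top_of_le_ne_top (by simp) (le1 f h1 h2 hf x hx)),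
        ENNReal.mul_div_cancel h1 h2]
    rw [conv f fz f0 mf hf, conv g gz g0 mg hg, ENNReal.mul_rpow_of_nonneg _ _ ha.le,
      ENNReal.mul_rpow_of_nonneg _ _ hb.le]
    calc _ = C * ((∫⁻ x in Set.Icc 0 R, ENNReal.ofReal (f x / A).toReal) ^ a
      * (∫⁻ x in Set.Icc 0 R, ENNReal.ofReal (g x / B).toReal) ^ b) := by rw [hC]; ring
      _ ≤ C * _ := mul_le_mul_right main C
      _ ≤ C * ∫⁻ x in Set.Icc 0 R, h x / C := by
        gcongr with x
        rw [ENNReal.ofReal_toReal (ne_top_of_le_ne_top (by simp) (min_le_right _ _))]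
        exact min_le_left _ _
      _ = _ := by
        rw [← lintegral_const_mul _ (by fun_prop)]
        congr 1; ext x
        rw [ENNReal.mul_div_cancel C0 Ct]
  · intro x hx y hy
    rw [ENNReal.toReal_rpow, ENNReal.toReal_rpow, ← ENNReal.toReal_mul]
    apply ENNReal.toReal_mono (ne_top_of_le_ne_top (by simp) (min_le_right _ _))
    apply le_min
    · rw [ENNReal.div_rpow_of_nonneg _ _ ha.le, ENNReal.div_rpow_of_nonneg _ _ hb.le]
      have e : f x ^ a / A ^ a * (g y ^ b / B ^ b) = f x ^ a * g y ^ b / C := by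
        rw [hC, div_eq_mul_inv, div_eq_mul_inv, div_eq_mul_inv, ENNReal.mul_inv]
        · ring
        · left; simp [ENNReal.rpow_eq_zero_iff, fz, f0]
        · left; exact ENNReal.rpow_ne_top_of_nonneg ha.le f0
      rw [e]
      gcongr
      exact H x hx y hy
    · calc _ ≤ (1:ENNReal) ^ a * 1 ^ b := by
            gcongr
            · exact le1 f fz f0 hf x hx
            · exact le1 g gz g0 hg y hy
        _ = 1 := by simp

lemma pln {R a b : ℝ} (ha : 0 < a) (hb : 0 < b) (hab : a + b = 1) (hR : 0 ≤ R) (m : ℕ) :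
    ∀ {f g h : (Fin m → ℝ) → ENNReal},
    Measurable f → Measurable g → Measurable h →
    (∃ M : ENNReal, M ≠ ⊤ ∧ ∀ x, f x ≤ M) → (∃ M : ENNReal, M ≠ ⊤ ∧ ∀ x, g x ≤ M) →
    AntitoneOn f {x | ∀ i, x i ∈ Set.Icc 0 R} → AntitoneOn g {x | ∀ i, x i ∈ Set.Icc 0 R} →
    (∀ x, (∀ i, x i ∈ Set.Icc 0 R) → ∀ y, (∀ i, y i ∈ Set.Icc 0 R) →
      f x ^ a * g y ^ b ≤ h (fun i => a * x i + b * y i)) →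
    (∫⁻ x, f x ∂(Measure.pi fun _ => volume.restrict (Set.Icc 0 R))) ^ a
      * (∫⁻ x, g x ∂(Measure.pi fun _ => volume.restrict (Set.Icc 0 R))) ^ b
      ≤ ∫⁻ x, h x ∂(Measure.pi fun _ => volume.restrict (Set.Icc 0 R)) := by
  induction m with
  | zero =>
    intro f g h mf mg mh _ _ _ _ H
    rw [Measure.pi_of_empty]
    rw [lintegral_dirac, lintegral_dirac, lintegral_dirac]
    refine (H isEmptyElim (fun i => i.elim0) isEmptyElim (fun i => i.elim0)).trans_eq ?_
    congr 1
    exact Subsingleton.elim _ _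
  | succ m ih =>
    intro f g h mf mg mh bf bg af ag H
    have cm : Measurable fun z : ℝ × (Fin m → ℝ) => (Fin.cons z.1 z.2 : Fin (m+1) → ℝ) := by
      exact measurable_pi_iff.2 (fun i => by
        refine Fin.cases ?_ (fun j => ?_) i
        · simpa using measurable_fst
        · exact (measurable_pi_apply j).comp measurable_snd)
    have fub : ∀ f : (Fin (m+1) → ℝ) → ENNReal, Measurable f →
        ∫⁻ x, f x ∂(Measure.pi fun _ => volume.restrict (Set.Icc 0 R)) =
        ∫⁻ t in Set.Icc 0 R, ∫⁻ y, f (Fin.cons t y)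
          ∂(Measure.pi fun _ => volume.restrict (Set.Icc 0 R)) := by
      intro f mf
      have := (measurePreserving_piFinSuccAbove (fun _ : Fin (m+1) =>
        (volume.restrict (Set.Icc 0 R) : Measure ℝ)) 0).symm
      rw [← this.lintegral_comp mf, lintegral_prod _ (by
        exact (mf.comp (MeasurableEquiv.measurable _)).aemeasurable)]
      simp [MeasurableEquiv.piFinSuccAbove, Fin.insertNthEquiv]
    rw [fub f mf, fub g mg, fub h mh]
    have mF : ∀ f : (Fin (m+1) → ℝ) → ENNReal, Measurable f →
        Measurable fun t : ℝ => ∫⁻ y, f (Fin.cons t y)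
          ∂(Measure.pi fun _ => volume.restrict (Set.Icc 0 R)) := by
      intro f mf
      exact Measurable.lintegral_prod_right' (f := fun z : ℝ × (Fin m → ℝ) => f (Fin.cons z.1 z.2))
        (mf.comp cm)
    have mem : ∀ {t : ℝ} {y : Fin m → ℝ}, t ∈ Set.Icc 0 R → (∀ i, y i ∈ Set.Icc 0 R) →
        ∀ i, (Fin.cons t y : Fin (m+1) → ℝ) i ∈ Set.Icc 0 R := by
      intro t y ht hy i
      refine Fin.cases ?_ (fun j => ?_) i
      · simpa using ht
      · simpa using hy j
    have fin : ∀ f : (Fin (m+1) → ℝ) → ENNReal, (∃ M : ENNReal, M ≠ ⊤ ∧ ∀ x, f x ≤ M) →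
        ∫⁻ y, f (Fin.cons 0 y) ∂(Measure.pi fun _ : Fin m => volume.restrict (Set.Icc 0 R)) ≠ ⊤ := by
      rintro f ⟨M, hM, hfM⟩
      refine ne_top_of_le_ne_top ?_ (lintegral_mono (fun y => hfM _))
      rw [lintegral_const]
      exact ENNReal.mul_ne_top hM (measure_ne_top _ _)
    have aeb : ∀ᵐ y ∂(Measure.pi fun _ : Fin m => volume.restrict (Set.Icc (0:ℝ) R)),
        ∀ i, y i ∈ Set.Icc 0 R := by
      rw [ae_all_iff]
      intro i
      have : ∀ᵐ t ∂(volume.restrict (Set.Icc (0:ℝ) R)), t ∈ Set.Icc 0 R :=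
        ae_restrict_mem measurableSet_Icc
      exact (Measure.quasiMeasurePreserving_eval (μ := fun _ : Fin m =>
        volume.restrict (Set.Icc (0:ℝ) R)) i).ae this
    have anti : ∀ f : (Fin (m+1) → ℝ) → ENNReal, AntitoneOn f {x | ∀ i, x i ∈ Set.Icc 0 R} →
        AntitoneOn (fun t : ℝ => ∫⁻ y, f (Fin.cons t y)
          ∂(Measure.pi fun _ => volume.restrict (Set.Icc 0 R))) (Set.Icc 0 R) := by
      intro f af t ht u hu htu
      apply lintegral_mono_ae
      filter_upwards [aeb] with y hy
      apply af (mem ht hy) (mem hu hy)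
      rw [Fin.cons_le_cons]
      exact ⟨htu, le_refl _⟩
    have anti2 : ∀ f : (Fin (m+1) → ℝ) → ENNReal, AntitoneOn f {x | ∀ i, x i ∈ Set.Icc 0 R} →
        ∀ t ∈ Set.Icc 0 R, AntitoneOn (fun y : Fin m → ℝ => f (Fin.cons t y))
          {x | ∀ i, x i ∈ Set.Icc 0 R} := by
      intro f af t ht y hy z hz hyz
      apply af (mem ht hy) (mem ht hz)
      rw [Fin.cons_le_cons]
      exact ⟨le_refl _, hyz⟩
    have ms : ∀ (f : (Fin (m+1) → ℝ) → ENNReal) (t : ℝ), Measurable f →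
        Measurable (fun y : Fin m → ℝ => f (Fin.cons t y)) := fun f t mf =>
      mf.comp (cm.comp (measurable_const.prodMk measurable_id))
    refine pl1 ha hb hab hR (mF f mf) (mF g mg) (mF h mh) (fin f bf) (fin g bg)
      (anti f af) (anti g ag) ?_
    intro t ht u hu
    obtain ⟨M, hM, hfM⟩ := bf
    obtain ⟨N, hN, hgN⟩ := bg
    refine ih (ms f t mf) (ms g u mg) (ms h _ mh) ⟨M, hM, fun _ => hfM _⟩ ⟨N, hN, fun _ => hgN _⟩
      (anti2 f af t ht) (anti2 g ag u hu) ?_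
    intro x hx y hy
    refine (H _ (mem ht hx) _ (mem hu hy)).trans_eq ?_
    congr 1
    ext i
    refine Fin.cases ?_ (fun j => ?_) i <;> simp

end PL

section OneDim

lemma integrable_bdd_supp {g φ : ℝ → ℝ} {s R : ℝ} (mg : Measurable g) (hφ : Continuous φ)
    (g0 : ∀ t, 0 ≤ g t) (gs : ∀ t, 0 < t → g t ≤ s) (gR : ∀ t, R < t → g t = 0) :
    IntegrableOn (fun t => φ t * g t) (Set.Ioi 0) := by
  have h1 : IntegrableOn (fun t => φ t * g t) (Set.Ioc 0 R) := by
    apply Integrable.mul_bdd (c := s)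
    · exact hφ.integrableOn_Ioc
    · exact mg.aestronglyMeasurable
    · filter_upwards [ae_restrict_mem measurableSet_Ioc] with t ht
      rw [Real.norm_of_nonneg (g0 t)]; exact gs t ht.1
  have h2 : IntegrableOn (fun t => φ t * g t) (Set.Ioi R) := by
    apply integrableOn_zero.congr_fun _ measurableSet_Ioi
    intro t ht
    simp [gR t ht]
  refine (h1.union h2).mono_set ?_
  intro t ht
  rcases le_or_gt t R with h | h
  · left; exact ⟨ht, h⟩
  · right; exact h

lemma exp_int {k : ℝ} (hk : 0 < k) : IntegrableOn (fun t => Real.exp (-(k * t))) (Set.Ioi 0) ∧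
    ∫ t in Set.Ioi 0, Real.exp (-(k * t)) = 1 / k := by
  have := Real.integral_rpow_mul_exp_neg_mul_Ioi (a := 1) one_pos hk
  simp at this
  refine ⟨Integrable.of_integral_ne_zero ?_, ?_⟩
  · rw [this]; positivity
  · rw [this]; simp

lemma sq_exp_int {k : ℝ} (hk : 0 < k) :
    IntegrableOn (fun t => t ^ 2 * Real.exp (-(k * t))) (Set.Ioi 0) ∧
    ∫ t in Set.Ioi 0, t ^ 2 * Real.exp (-(k * t)) = 2 / k ^ 3 := by
  have := Real.integral_rpow_mul_exp_neg_mul_Ioi (a := 3) (by norm_num) hk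
  have e : Real.Gamma 3 = 2 := by
    have := Real.Gamma_nat_eq_factorial 2
    rw [show ((2:ℕ):ℝ) + 1 = 3 by norm_num] at this
    rw [this]; norm_num [Nat.factorial]
  rw [e] at this
  norm_num at this
  have h3 : ((k ^ 3)⁻¹ * 2 : ℝ) = 2 / k ^ 3 := by field_simp
  rw [h3] at this
  refine ⟨Integrable.of_integral_ne_zero ?_, ?_⟩
  · rw [this]; positivity
  · rw [this]

lemma moment_upper {g : ℝ → ℝ} {R v : ℝ} (mg : Measurable g) (hv : 0 < v)
    (g0 : ∀ t, 0 ≤ g t) (gs : ∀ t, 0 < t → g t ≤ g 0) (gR : ∀ t, R < t → g t = 0)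
    (lc : ∀ a b t : ℝ, 0 < a → 0 < b → a + b = 1 → 0 < t → g 0 ^ a * g t ^ b ≤ g (b * t))
    (hint : ∫ t in Set.Ioi 0, g t = v) (hs : 2 * v ≤ g 0) :
    ∫ t in Set.Ioi 0, t ^ 2 * g t ≤ v / 2 := by
  set s := g 0 with hsdef
  have spos : 0 < s := by linarith
  set k := s / v with hk
  have kpos : 0 < k := by positivity
  set T : Set ℝ := {t | 0 ≤ t ∧ s * Real.exp (-(k * t)) ≤ g t} with hT
  have h0T : (0:ℝ) ∈ T := ⟨le_refl _, by simp [hsdef]⟩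
  have hbdd : BddAbove T := by
    refine ⟨R, fun t ht => ?_⟩
    by_contra hc
    have h1 := ht.2
    rw [gR t (not_le.1 hc)] at h1
    have : 0 < s * Real.exp (-(k * t)) := by positivity
    linarith
  set c := sSup T with hc
  have c0 : 0 ≤ c := le_csSup hbdd h0T
  have pt : ∀ t, 0 < t → (t ^ 2 - c ^ 2) * (g t - s * Real.exp (-(k * t))) ≤ 0 := by
    intro u hu
    rcases lt_trichotomy u c with h | h | h
    · obtain ⟨t, ht, hut⟩ := exists_lt_of_lt_csSup ⟨0, h0T⟩ h
      have htpos : 0 < t := hu.trans hut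
      have hl : u / t < 1 := (div_lt_one htpos).2 hut
      have := lc (1 - u / t) (u / t) t (by linarith) (by positivity) (by ring) htpos
      rw [div_mul_cancel₀ _ htpos.ne'] at this
      have h2 : s ^ (1 - u / t) * (s * Real.exp (-(k * t))) ^ (u / t) ≤ g u := by
        refine le_trans ?_ this
        gcongr
        exact ht.2
      have h3 : s ^ (1 - u / t) * (s * Real.exp (-(k * t))) ^ (u / t)
          = s * Real.exp (-(k * u)) := by
        rw [Real.mul_rpow spos.le (Real.exp_pos _).le, ← mul_assoc, ← Real.rpow_add spos,
          ← Real.exp_mul]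
        rw [show 1 - u / t + u / t = 1 by ring, Real.rpow_one]
        congr 2
        field_simp
      rw [h3] at h2
      have : u ^ 2 ≤ c ^ 2 := by nlinarith
      nlinarith
    · rw [h]; simp
    · have : g u < s * Real.exp (-(k * u)) := by
        by_contra hcon
        have : u ∈ T := ⟨hu.le, not_lt.1 hcon⟩
        linarith [le_csSup hbdd this]
      have : c ^ 2 ≤ u ^ 2 := by nlinarith
      nlinarith
  obtain ⟨i1, e1⟩ := exp_int kpos
  obtain ⟨i2, e2⟩ := sq_exp_int kpos
  have j1 : IntegrableOn (fun t => t ^ 2 * g t) (Set.Ioi 0) :=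
    integrable_bdd_supp mg (by fun_prop) g0 gs gR
  have j2 : IntegrableOn (fun t => g t) (Set.Ioi 0) := by
    simpa using integrable_bdd_supp (φ := fun _ => 1) mg (by fun_prop) g0 gs gR
  have i3 : IntegrableOn (fun t => g t - s * Real.exp (-(k * t))) (Set.Ioi 0) :=
    j2.sub (i1.const_mul s)
  have i4 : IntegrableOn (fun t => c ^ 2 * (g t - s * Real.exp (-(k * t)))) (Set.Ioi 0) :=
    i3.const_mul _
  have i5 : IntegrableOn (fun t => s * (t ^ 2 * Real.exp (-(k * t)))
      + c ^ 2 * (g t - s * Real.exp (-(k * t)))) (Set.Ioi 0) := by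
    apply Integrable.add
    · exact i2.const_mul s
    · exact i4
  have := setIntegral_mono_on (μ := volume) (s := Set.Ioi (0:ℝ))
    (f := fun t => t ^ 2 * g t)
    (g := fun t => s * (t ^ 2 * Real.exp (-(k * t)))
      + c ^ 2 * (g t - s * Real.exp (-(k * t)))) j1
    i5 measurableSet_Ioi
    (fun t ht => by have := pt t ht; nlinarith)
  rw [integral_add (i2.const_mul s) i4,
    integral_const_mul, integral_const_mul, integral_sub j2 (i1.const_mul s), integral_const_mul,
    e1, e2, hint] at this
  have e3 : v - s * (1 / k) = 0 := by rw [hk]; field_simp; ring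
  have e4 : s * (2 / k ^ 3) = 2 * v ^ 3 / s ^ 2 := by rw [hk]; field_simp
  rw [e3, e4] at this
  refine this.trans ?_
  rw [mul_zero, add_zero, div_le_iff₀ (by positivity)]
  have : (2 * v) ^ 2 ≤ s ^ 2 := by gcongr
  nlinarith

lemma moment_lower {g : ℝ → ℝ} {R v s : ℝ} (mg : Measurable g) (hv : 0 < v) (hs : 0 ≤ s)
    (g0 : ∀ t, 0 ≤ g t) (gs : ∀ t, 0 < t → g t ≤ s) (gR : ∀ t, R < t → g t = 0)
    (hint : ∫ t in Set.Ioi 0, g t = v) (hm : ∫ t in Set.Ioi 0, t ^ 2 * g t ≤ v / 2) :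
    2 * v ^ 2 ≤ 3 * s ^ 2 := by
  have j1 : IntegrableOn (fun t => t ^ 2 * g t) (Set.Ioi 0) :=
    integrable_bdd_supp mg (by fun_prop) g0 gs gR
  have j2 : IntegrableOn (fun t => g t) (Set.Ioi 0) := by
    simpa using integrable_bdd_supp (φ := fun _ => 1) mg (by fun_prop) g0 gs gR
  have spos : 0 < s := by
    rcases hs.eq_or_lt with h | h
    · exfalso
      have : ∫ t in Set.Ioi 0, g t = 0 := by
        apply setIntegral_eq_zero_of_forall_eq_zero
        intro t ht
        linarith [gs t ht, g0 t]
      linarith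
    · exact h
  set c := v / s with hc
  have cpos : 0 < c := by positivity
  set q : ℝ → ℝ := Set.indicator (Set.Ioc 0 c) (fun t => s * (t ^ 2 - c ^ 2)) with hq
  have iq : IntegrableOn (fun t => s * (t ^ 2 - c ^ 2)) (Set.Ioc 0 c) :=
    Continuous.integrableOn_Ioc (by fun_prop)
  have jq : IntegrableOn q (Set.Ioi 0) := by
    rw [hq]
    exact ((integrable_indicator_iff measurableSet_Ioc).2 iq).integrableOn
  have eq : ∫ t in Set.Ioi 0, q t = - (2/3 * c ^ 3 * s) := by
    rw [hq, setIntegral_indicator measurableSet_Ioc,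
      Set.inter_eq_self_of_subset_right (fun t ht => ht.1),
      ← intervalIntegral.integral_of_le cpos.le]
    rw [intervalIntegral.integral_const_mul, intervalIntegral.integral_sub
      (by apply Continuous.intervalIntegrable; fun_prop) (by simp)]
    simp
    ring
  have := setIntegral_mono_on (μ := volume) (s := Set.Ioi (0:ℝ))
    (f := fun t => q t + c ^ 2 * g t) (g := fun t => t ^ 2 * g t) (jq.add (j2.const_mul _)) j1
    measurableSet_Ioi (fun t ht => by
      have h0 := g0 t
      have h1 := gs t ht
      have ht' : 0 < t := ht
      rcases le_or_gt t c with h | h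
      · have : q t = s * (t ^ 2 - c ^ 2) := by rw [hq, Set.indicator_of_mem]; exact ⟨ht, h⟩
        rw [this]
        have : t ^ 2 ≤ c ^ 2 := by nlinarith
        nlinarith
      · have : q t = 0 := by rw [hq, Set.indicator_of_notMem]; exact fun h' => by linarith [h'.2]
        rw [this]
        have : c ^ 2 ≤ t ^ 2 := by nlinarith
        nlinarith)
  rw [integral_add jq (j2.const_mul _), integral_const_mul, eq, hint] at this
  have h5 : -(2/3 * c ^ 3 * s) + c ^ 2 * v = v ^ 3 / (3 * s ^ 2) := by
    rw [hc]; field_simp; ring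
  rw [h5] at this
  have h6 := this.trans hm
  rw [div_le_iff₀ (by positivity)] at h6
  have h7 : v * (2 * v ^ 2) ≤ v * (3 * s ^ 2) := by nlinarith
  exact le_of_mul_le_mul_left h7 hv

end OneDim

section Geom

/-- part of `K` in the open positive orthant -/
def posV {n : ℕ} (K : Set (Fin n → ℝ)) : Set (Fin n → ℝ) := {x | x ∈ K ∧ ∀ i, 0 < x i}

/-- positive part of the section of `K` at height `t` in direction `i` -/
def secV {m : ℕ} (K : Set (Fin (m+1) → ℝ)) (i : Fin (m+1)) (t : ℝ) : Set (Fin m → ℝ) :=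
  {y | (∀ j, 0 < y j) ∧ (i.insertNth t y : Fin (m+1) → ℝ) ∈ K}

lemma scale_mem {n : ℕ} {K : Set (Fin n → ℝ)} (hconv : Convex ℝ K)
    (hunc : ∀ x ∈ K, ∀ ε : Fin n → ℝ, (∀ i, ε i = 1 ∨ ε i = -1) → (fun i => ε i * x i) ∈ K)
    {x : Fin n → ℝ} (hx : x ∈ K) (c : Fin n → ℝ) (hc : ∀ i, |c i| ≤ 1) :
    (fun i => c i * x i) ∈ K := by
  have key : ∀ s : Finset (Fin n), (fun i => (if i ∈ s then c i else 1) * x i) ∈ K := by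
    intro s
    induction s using Finset.induction_on with
    | empty => simpa using hx
    | insert a s ha ih =>
      have h2 := hunc _ ih (fun i => if i = a then -1 else 1) (by
        intro i; by_cases h : i = a <;> simp [h])
      have hca := abs_le.1 (hc a)
      have := hconv ih h2 (a := (1 + c a) / 2) (b := (1 - c a) / 2) (by linarith) (by linarith)
        (by ring)
      convert this using 1
      ext i
      simp only [Pi.add_apply, Pi.smul_apply, smul_eq_mul, Finset.mem_insert]
      by_cases h : i = a
      · subst h; simp [ha]; ring
      · simp only [h, false_or, if_false]; ring
  simpa using key Finset.univ

lemma solid {n : ℕ} {K : Set (Fin n → ℝ)} (hconv : Convex ℝ K)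
    (hunc : ∀ x ∈ K, ∀ ε : Fin n → ℝ, (∀ i, ε i = 1 ∨ ε i = -1) → (fun i => ε i * x i) ∈ K)
    {x y : Fin n → ℝ} (hx : x ∈ K) (hy : ∀ i, |y i| ≤ |x i|) : y ∈ K := by
  have := scale_mem hconv hunc hx (fun i => y i / x i) (fun i => by
    rw [abs_div]; exact div_le_one_of_le₀ (hy i) (abs_nonneg _))
  convert this using 1
  ext i
  by_cases h : x i = 0
  · have := hy i
    rw [h] at this
    simp at this
    simp [h, this]
  · field_simp

lemma ins_meas {m : ℕ} (i : Fin (m+1)) :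
    Measurable fun z : ℝ × (Fin m → ℝ) => (i.insertNth z.1 z.2 : Fin (m+1) → ℝ) :=
  (MeasurableEquiv.piFinSuccAbove (fun _ : Fin (m+1) => ℝ) i).symm.measurable

lemma fub {m : ℕ} (i : Fin (m+1)) {φ : (Fin (m+1) → ℝ) → ENNReal} (hφ : Measurable φ) :
    ∫⁻ x, φ x = ∫⁻ t : ℝ, ∫⁻ y : Fin m → ℝ, φ (i.insertNth t y) := by
  have := (volume_preserving_piFinSuccAbove (fun _ : Fin (m+1) => ℝ) i).symm
  rw [← this.lintegral_comp hφ, Measure.volume_eq_prod, lintegral_prod _ (by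
    exact (hφ.comp (MeasurableEquiv.measurable _)).aemeasurable)]
  rfl

lemma fub' {m : ℕ} (i : Fin (m+1)) {φ : (Fin (m+1) → ℝ) → ENNReal} (hφ : Measurable φ) :
    ∫⁻ x, φ x = ∫⁻ y : Fin m → ℝ, ∫⁻ t : ℝ, φ (i.insertNth t y) := by
  rw [fub i hφ, lintegral_lintegral_swap]
  exact (hφ.comp (ins_meas i)).aemeasurable

lemma pos_meas {n : ℕ} : MeasurableSet {x : Fin n → ℝ | ∀ i, 0 < x i} := by
  have : {x : Fin n → ℝ | ∀ i, 0 < x i} = ⋂ i, {x | 0 < x i} := by ext; simp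
  rw [this]
  exact MeasurableSet.iInter fun i => measurableSet_lt measurable_const (measurable_pi_apply i)

lemma posV_meas {n : ℕ} {K : Set (Fin n → ℝ)} (hK : MeasurableSet K) : MeasurableSet (posV K) :=
  hK.inter pos_meas

lemma secV_prod_meas {m : ℕ} {K : Set (Fin (m+1) → ℝ)} (hK : MeasurableSet K) (i : Fin (m+1)) :
    MeasurableSet {z : ℝ × (Fin m → ℝ) | z.2 ∈ secV K i z.1} :=
  (measurable_snd pos_meas).inter (ins_meas i hK)

lemma secV_meas {m : ℕ} {K : Set (Fin (m+1) → ℝ)} (hK : MeasurableSet K) (i : Fin (m+1)) (t : ℝ) :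
    MeasurableSet (secV K i t) :=
  measurable_prodMk_left (x := t) (secV_prod_meas hK i)

lemma sec_vol_meas {m : ℕ} {K : Set (Fin (m+1) → ℝ)} (hK : MeasurableSet K) (i : Fin (m+1)) :
    Measurable fun t => volume (secV K i t) :=
  measurable_measure_prodMk_left (secV_prod_meas hK i)

lemma ins_posV {m : ℕ} {K : Set (Fin (m+1) → ℝ)} (i : Fin (m+1)) {t : ℝ} {y : Fin m → ℝ} :
    (i.insertNth t y : Fin (m+1) → ℝ) ∈ posV K ↔ 0 < t ∧ y ∈ secV K i t := by
  unfold posV secV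
  simp only [Set.mem_ofPred_eq]
  rw [Fin.forall_iff_succAbove i]
  simp
  tauto

lemma slice {m : ℕ} {K : Set (Fin (m+1) → ℝ)} (hK : MeasurableSet K) (i : Fin (m+1))
    {w : ℝ → ENNReal} (hw : Measurable w) :
    ∫⁻ x in posV K, w (x i) = ∫⁻ t in Set.Ioi 0, w t * volume (secV K i t) := by
  rw [← lintegral_indicator (posV_meas hK), ← lintegral_indicator measurableSet_Ioi,
    fub i (φ := (posV K).indicator fun x => w (x i)) (Measurable.indicator (f := fun x : Fin (m+1) → ℝ => w (x i)) (hw.comp (measurable_pi_apply i))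
      (posV_meas hK))]
  congr 1; ext t
  by_cases ht : 0 < t
  · rw [Set.indicator_of_mem (show t ∈ Set.Ioi 0 from ht), ← lintegral_indicator_const
      (secV_meas hK i t)]
    congr 1; ext y
    by_cases hy : y ∈ secV K i t
    · rw [Set.indicator_of_mem ((ins_posV i).2 ⟨ht, hy⟩), Set.indicator_of_mem hy]; simp
    · rw [Set.indicator_of_notMem (fun h => hy ((ins_posV i).1 h).2), Set.indicator_of_notMem hy]
  · rw [Set.indicator_of_notMem (show t ∉ Set.Ioi 0 from ht), lintegral_eq_zero_of_ae_eq_zero]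
    apply ae_of_all
    intro y
    simp only [Pi.zero_apply]
    rw [Set.indicator_of_notMem (fun h => ht ((ins_posV i).1 h).1)]

lemma signs {n : ℕ} {K : Set (Fin n → ℝ)} (hK : MeasurableSet K)
    (hunc : ∀ x ∈ K, ∀ ε : Fin n → ℝ, (∀ i, ε i = 1 ∨ ε i = -1) → (fun i => ε i * x i) ∈ K)
    {φ : (Fin n → ℝ) → ENNReal} (hφ : Measurable φ)
    (hinv : ∀ x, ∀ ε : Fin n → ℝ, (∀ i, ε i = 1 ∨ ε i = -1) → φ (fun i => ε i * x i) = φ x) :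
    ∫⁻ x in K, φ x = 2 ^ n * ∫⁻ x in posV K, φ x := by
  classical
  set sg : Bool → ℝ := fun b => if b then 1 else -1 with hsg
  have hsg1 : ∀ b, sg b = 1 ∨ sg b = -1 := by intro b; cases b <;> simp [hsg]
  have mp : ∀ ε : Fin n → Bool, MeasurePreserving (fun x : Fin n → ℝ => fun i => sg (ε i) * x i) := by
    intro ε
    apply volume_preserving_pi (f := fun i t => sg (ε i) * t)
    intro i
    rcases hsg1 (ε i) with h | h
    · simp only [h, one_mul]; exact MeasurePreserving.id _
    · simp only [h, neg_one_mul]; exact Measure.measurePreserving_neg _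
  have mi : Measurable ((posV K).indicator φ) := hφ.indicator (posV_meas hK)
  rw [← lintegral_indicator hK, ← lintegral_indicator (posV_meas hK)]
  have ae0 : ∀ᵐ x : Fin n → ℝ, ∀ i, x i ≠ 0 := by
    rw [ae_all_iff]
    intro i
    have : ∀ᵐ t : ℝ, t ≠ 0 := by simp [ae_iff]
    exact (Measure.quasiMeasurePreserving_eval (μ := fun _ : Fin n => (volume : Measure ℝ)) i).ae this
  have e : ∀ᵐ x : Fin n → ℝ, K.indicator φ x
      = ∑ ε : Fin n → Bool, (posV K).indicator φ (fun i => sg (ε i) * x i) := by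
    filter_upwards [ae0] with x hx
    rw [Finset.sum_eq_single (fun i => decide (0 < x i))]
    · have hpos : ∀ i, 0 < sg (decide (0 < x i)) * x i := by
        intro i
        by_cases h : 0 < x i
        · simp [hsg, h]
        · simp only [hsg, h]
          have := lt_of_le_of_ne (not_lt.1 h) (hx i)
          simpa using this
      by_cases hxK : x ∈ K
      · rw [Set.indicator_of_mem hxK, Set.indicator_of_mem, hinv _ _ (fun i => hsg1 _)]
        exact ⟨hunc x hxK _ (fun i => hsg1 _), hpos⟩
      · rw [Set.indicator_of_notMem hxK, Set.indicator_of_notMem]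
        intro h
        apply hxK
        have := hunc _ h.1 (fun i => sg (decide (0 < x i))) (fun i => hsg1 _)
        convert this using 1
        ext i
        rcases hsg1 (decide (0 < x i)) with h | h <;> rw [h] <;> ring
    · intro ε _ hε
      apply Set.indicator_of_notMem
      intro h
      apply hε
      ext i
      have := h.2 i
      cases hb : ε i
      · simp [hsg, hb] at this
        simp; linarith
      · simp [hsg, hb] at this
        simp [this]
    · simp
  rw [lintegral_congr_ae e, lintegral_finsetSum _ (fun ε _ => by
    exact mi.comp (mp ε).measurable)]
  have : ∀ ε : Fin n → Bool, ∫⁻ x : Fin n → ℝ, (posV K).indicator φ (fun i => sg (ε i) * x i)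
      = ∫⁻ x : Fin n → ℝ, (posV K).indicator φ x := fun ε => (mp ε).lintegral_comp mi
  simp [this]

end Geom
section Main

lemma convex_ins {m : ℕ} {K : Set (Fin (m+1) → ℝ)} (hconv : Convex ℝ K) (i : Fin (m+1))
    {a b t u : ℝ} {x y : Fin m → ℝ} (ha : 0 ≤ a) (hb : 0 ≤ b) (hab : a + b = 1)
    (hx : (i.insertNth t x : Fin (m+1) → ℝ) ∈ K) (hy : (i.insertNth u y : Fin (m+1) → ℝ) ∈ K) :
    (i.insertNth (a * t + b * u) (fun j => a * x j + b * y j) : Fin (m+1) → ℝ) ∈ K := by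
  convert hconv hx hy ha hb hab using 1
  ext j
  refine Fin.succAboveCases i ?_ (fun j => ?_) j <;> simp

lemma solid_ins {m : ℕ} {K : Set (Fin (m+1) → ℝ)} (hconv : Convex ℝ K)
    (hunc : ∀ x ∈ K, ∀ ε : Fin (m+1) → ℝ, (∀ i, ε i = 1 ∨ ε i = -1) → (fun i => ε i * x i) ∈ K)
    (i : Fin (m+1)) {t u : ℝ} {x y : Fin m → ℝ} (hu : 0 ≤ u) (hut : u ≤ t)
    (hy : ∀ j, 0 ≤ y j) (hyx : ∀ j, y j ≤ x j)
    (hx : (i.insertNth t x : Fin (m+1) → ℝ) ∈ K) :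
    (i.insertNth u y : Fin (m+1) → ℝ) ∈ K := by
  apply solid hconv hunc hx
  intro j
  refine Fin.succAboveCases i ?_ (fun j => ?_) j
  · simp [abs_of_nonneg hu, abs_of_nonneg (hu.trans hut), hut]
  · simp [abs_of_nonneg (hy j), abs_of_nonneg ((hy j).trans (hyx j)), hyx j]

lemma sec_vol_eq {m : ℕ} {K : Set (Fin (m+1) → ℝ)} (hK : MeasurableSet K) {R : ℝ}
    (hR : ∀ x ∈ K, ∀ i, |x i| ≤ R) (i : Fin (m+1)) (t : ℝ) :
    volume (secV K i t) = ∫⁻ y, ({y | (i.insertNth t y : Fin (m+1) → ℝ) ∈ K}.indicator 1 y : ENNReal)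
      ∂(Measure.pi fun _ => volume.restrict (Set.Icc 0 R)) := by
  have mA : MeasurableSet {y | (i.insertNth t y : Fin (m+1) → ℝ) ∈ K} :=
    (ins_meas i).comp (measurable_prodMk_left (x := t)) hK
  rw [lintegral_indicator_one mA, ← Measure.restrict_pi_pi, Measure.restrict_apply mA,
    ← volume_pi]
  have h1 : {y | (i.insertNth t y : Fin (m+1) → ℝ) ∈ K} ∩ (Set.univ.pi fun _ => Set.Icc 0 R)
      = {y | (i.insertNth t y : Fin (m+1) → ℝ) ∈ K} ∩ Set.Ici 0 := by
    ext y
    simp only [Set.mem_inter_iff, Set.mem_ofPred_eq, Set.mem_pi, Set.mem_univ, Set.mem_Icc,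
      true_implies, Set.mem_Ici, Pi.le_def, Pi.zero_apply]
    constructor
    · rintro ⟨h, h'⟩; exact ⟨h, fun j => (h' j).1⟩
    · rintro ⟨h, h'⟩
      refine ⟨h, fun j => ⟨h' j, ?_⟩⟩
      have := hR _ h (i.succAbove j)
      simp at this
      exact (le_abs_self _).trans this
  have h2 : secV K i t = {y | (i.insertNth t y : Fin (m+1) → ℝ) ∈ K}
      ∩ (Set.univ.pi fun j : Fin m => Set.Ioi ((0 : Fin m → ℝ) j)) := by
    ext y; simp [secV, and_comm]
  rw [h1, h2]
  apply measure_congr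
  exact (ae_eq_refl _).inter (Measure.univ_pi_Ioi_ae_eq_Ici (μ := fun _ : Fin m => volume)
    (f := (0 : Fin m → ℝ)))

lemma sec_fin {m : ℕ} {K : Set (Fin (m+1) → ℝ)} (hK : MeasurableSet K) {R : ℝ}
    (hR : ∀ x ∈ K, ∀ i, |x i| ≤ R) (i : Fin (m+1)) (t : ℝ) : volume (secV K i t) ≠ ⊤ := by
  rw [sec_vol_eq hK hR]
  have : ∫⁻ y, ({y | (i.insertNth t y : Fin (m+1) → ℝ) ∈ K}.indicator 1 y : ENNReal)
      ∂(Measure.pi fun _ => volume.restrict (Set.Icc 0 R)) ≤ ∫⁻ y, 1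
      ∂(Measure.pi fun _ : Fin m => volume.restrict (Set.Icc 0 R)) := by
    apply lintegral_mono
    intro y
    exact Set.indicator_le_self' (by simp) y
  refine ne_top_of_le_ne_top ?_ this
  simp only [lintegral_const, one_mul]
  exact measure_ne_top _ _

lemma sec_logconc {m : ℕ} {K : Set (Fin (m+1) → ℝ)} (hK : MeasurableSet K) (hconv : Convex ℝ K)
    (hunc : ∀ x ∈ K, ∀ ε : Fin (m+1) → ℝ, (∀ i, ε i = 1 ∨ ε i = -1) → (fun i => ε i * x i) ∈ K)
    {R : ℝ} (hR0 : 0 ≤ R)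
    (hR : ∀ x ∈ K, ∀ i, |x i| ≤ R) (i : Fin (m+1)) {a b t u : ℝ} (ha : 0 < a) (hb : 0 < b)
    (hab : a + b = 1) (ht : 0 ≤ t) (hu : 0 ≤ u) :
    volume (secV K i t) ^ a * volume (secV K i u) ^ b ≤ volume (secV K i (a * t + b * u)) := by
  have mA : ∀ t, MeasurableSet {y | (i.insertNth t y : Fin (m+1) → ℝ) ∈ K} := fun t =>
    (ins_meas i).comp (measurable_prodMk_left (x := t)) hK
  rw [sec_vol_eq hK hR, sec_vol_eq hK hR, sec_vol_eq hK hR]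
  have bd : ∀ t, ∃ M : ENNReal, M ≠ ⊤ ∧ ∀ y,
      ({y | (i.insertNth t y : Fin (m+1) → ℝ) ∈ K}.indicator 1 y : ENNReal) ≤ M :=
    fun t => ⟨1, by simp, fun y => Set.indicator_le_self' (by simp) y⟩
  have anti : ∀ t, 0 ≤ t → AntitoneOn (fun y =>
      ({y | (i.insertNth t y : Fin (m+1) → ℝ) ∈ K}.indicator 1 y : ENNReal))
      {x | ∀ i, x i ∈ Set.Icc 0 R} := by
    intro t ht x hx y hy hxy
    by_cases h : (i.insertNth t y : Fin (m+1) → ℝ) ∈ K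
    · have h' : (i.insertNth t x : Fin (m+1) → ℝ) ∈ K :=
        solid_ins hconv hunc i ht le_rfl (fun j => (hx j).1) hxy h
      simp [Set.indicator, h, h']
    · simp [Set.indicator, h]
  refine pln ha hb hab hR0 m (measurable_one.indicator (mA t)) (measurable_one.indicator (mA u))
    (measurable_one.indicator (mA _)) (bd t) (bd u) (anti t ht) (anti u hu) ?_
  intro x hx y hy
  by_cases h1 : (i.insertNth t x : Fin (m+1) → ℝ) ∈ K
  · by_cases h2 : (i.insertNth u y : Fin (m+1) → ℝ) ∈ K
    · have h3 := convex_ins hconv i ha.le hb.le hab h1 h2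
      simp [Set.indicator, h1, h2, h3]
    · simp [Set.indicator, h2, ENNReal.zero_rpow_of_pos hb]
  · simp [Set.indicator, h1, ENNReal.zero_rpow_of_pos ha]

lemma sec_anti {m : ℕ} {K : Set (Fin (m+1) → ℝ)} (hconv : Convex ℝ K)
    (hunc : ∀ x ∈ K, ∀ ε : Fin (m+1) → ℝ, (∀ i, ε i = 1 ∨ ε i = -1) → (fun i => ε i * x i) ∈ K)
    (i : Fin (m+1)) {t : ℝ} (ht : 0 ≤ t) : secV K i t ⊆ secV K i 0 := fun _ hy =>
  ⟨hy.1, solid_ins hconv hunc i le_rfl ht (fun j => (hy.1 j).le) (fun _ => le_rfl) hy.2⟩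

/-- the Loomis-Whitney step -/
lemma lw_point {n : ℕ} (hn : 0 < n) (a : Fin n → ℝ) (ha : ∀ i, 0 < a i) :
    2 * (n:ℝ) ≤ ∑ i, (a i)⁻¹ + n * ∏ i, a i ^ (1 / (n:ℝ)) := by
  have hn' : (0:ℝ) < n := by exact_mod_cast hn
  have h1 : ∀ i, 1 - Real.log (a i) ≤ (a i)⁻¹ := by
    intro i
    have := Real.log_le_sub_one_of_pos (inv_pos.2 (ha i))
    rw [Real.log_inv] at this
    linarith
  have h2 : ∑ i, (1 - Real.log (a i)) ≤ ∑ i, (a i)⁻¹ := Finset.sum_le_sum fun i _ => h1 i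
  have h3 : ∏ i, a i ^ (1 / (n:ℝ)) = Real.exp ((∑ i, Real.log (a i)) / n) := by
    rw [Finset.sum_div, Real.exp_sum]
    apply Finset.prod_congr rfl
    intro i _
    rw [Real.rpow_def_of_pos (ha i)]
    congr 1; ring
  have h4 := Real.add_one_le_exp ((∑ i, Real.log (a i)) / n)
  rw [h3]
  rw [Finset.sum_sub_distrib] at h2
  simp at h2
  have h5 : n * ((∑ i, Real.log (a i)) / n + 1) ≤ n * Real.exp ((∑ i, Real.log (a i)) / n) := by
    gcongr
  have h6 : n * ((∑ i, Real.log (a i)) / n + 1) = (∑ i, Real.log (a i)) + n := by field_simp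
  linarith

lemma lw_point' {n : ℕ} (hn : 0 < n) (l : Fin n → ENNReal) (h0 : ∀ i, l i ≠ 0)
    (ht : ∀ i, l i ≠ ⊤) :
    4 * (n:ENNReal) ≤ ∑ i, (l i)⁻¹ + 4 * n * ∏ i, l i ^ (1 / (n:ℝ)) := by
  have hn' : (0:ℝ) < n := by exact_mod_cast hn
  have hp : ∀ i, 0 < (l i).toReal := fun i => ENNReal.toReal_pos (h0 i) (ht i)
  have := lw_point hn (fun i => 2 * (l i).toReal) (fun i => by have := hp i; positivity)
  have e1 : ∏ i, (2 * (l i).toReal) ^ (1 / (n:ℝ)) = 2 * ∏ i, (l i).toReal ^ (1 / (n:ℝ)) := by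
    have : ∀ i, (2 * (l i).toReal) ^ (1 / (n:ℝ)) = 2 ^ (1 / (n:ℝ)) * (l i).toReal ^ (1 / (n:ℝ)) :=
      fun i => Real.mul_rpow (by norm_num) (hp i).le
    simp_rw [this]
    rw [Finset.prod_mul_distrib]
    congr 1
    simp only [Finset.prod_const, Finset.card_univ, Fintype.card_fin]
    rw [← Real.rpow_natCast, ← Real.rpow_mul (by norm_num)]
    rw [one_div, inv_mul_cancel₀ hn'.ne', Real.rpow_one]
  have e2 : ∑ i, (2 * (l i).toReal)⁻¹ = (∑ i, (l i).toReal⁻¹) / 2 := by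
    rw [Finset.sum_div]
    apply Finset.sum_congr rfl
    intro i _
    rw [mul_inv]; ring
  rw [e1, e2] at this
  have h3 : 4 * (n:ℝ) ≤ ∑ i, (l i).toReal⁻¹ + 4 * n * ∏ i, (l i).toReal ^ (1 / (n:ℝ)) := by
    linarith
  have h4 := ENNReal.ofReal_le_ofReal h3
  have q1 : ∑ i, (l i)⁻¹ = ENNReal.ofReal (∑ i, (l i).toReal⁻¹) := by
    rw [ENNReal.ofReal_sum_of_nonneg (fun i _ => (inv_pos.2 (hp i)).le)]
    apply Finset.sum_congr rfl
    intro i _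
    rw [ENNReal.ofReal_inv_of_pos (hp i), ENNReal.ofReal_toReal (ht i)]
  have q2 : ∏ i, l i ^ (1 / (n:ℝ)) = ENNReal.ofReal (∏ i, (l i).toReal ^ (1 / (n:ℝ))) := by
    rw [ENNReal.ofReal_prod_of_nonneg (fun i _ => by have := hp i; positivity)]
    apply Finset.prod_congr rfl
    intro i _
    rw [← ENNReal.ofReal_rpow_of_pos (hp i), ENNReal.ofReal_toReal (ht i)]
  have q3 : (4 * (n:ENNReal)) = ENNReal.ofReal (4 * n) := by
    rw [ENNReal.ofReal_mul (by norm_num)]; simp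
  rw [q1, q2, q3, ← ENNReal.ofReal_mul (by positivity), ← ENNReal.ofReal_add]
  · exact h4
  · exact Finset.sum_nonneg fun i _ => (inv_pos.2 (hp i)).le
  · have : 0 ≤ ∏ i, (l i).toReal ^ (1 / (n:ℝ)) :=
      Finset.prod_nonneg fun i _ => by have := hp i; positivity
    positivity

lemma loomis {m : ℕ} {K : Set (Fin (m+1) → ℝ)} (hK : MeasurableSet K) (hconv : Convex ℝ K)
    (hunc : ∀ x ∈ K, ∀ ε : Fin (m+1) → ℝ, (∀ i, ε i = 1 ∨ ε i = -1) → (fun i => ε i * x i) ∈ K)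
    {R : ℝ} (hR : ∀ x ∈ K, ∀ i, |x i| ≤ R) (hv : 2 ^ (m+1) * volume (posV K) = 1) :
    ∃ i, 2 * volume (posV K) ≤ volume (secV K i 0) := by
  classical
  set v := volume (posV K) with hvdef
  have hv' : v = (2 ^ (m+1))⁻¹ := ENNReal.eq_inv_of_mul_eq_one_left (by rw [mul_comm]; exact hv)
  have vt : v ≠ ⊤ := by rw [hv']; simp
  set f : (Fin (m+1) → ℝ) → ENNReal := (posV K).indicator 1 with hf
  have mf : Measurable f := measurable_one.indicator (posV_meas hK)
  have intf : ∫⁻ x, f x = v := by rw [hf, lintegral_indicator_one (posV_meas hK)]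
  set l : Fin (m+1) → (Fin (m+1) → ℝ) → ENNReal := fun i x => ∫⁻ t, f (Function.update x i t) with hl
  have ml : ∀ i, Measurable (l i) := by
    intro i
    apply Measurable.lintegral_prod_right' (f := fun z : (Fin (m+1) → ℝ) × ℝ =>
      f (Function.update z.1 i z.2))
    apply mf.comp
    exact measurable_update'
  have grid := lintegral_mul_prod_lintegral_pow_le (ι := Fin (m+1)) (fun _ => (volume : Measure ℝ))
    (p := 1 / ((m+1 : ℕ):ℝ)) (by positivity) (by
      simp only [Fintype.card_fin]
      rw [mul_one_div, div_le_one (by positivity)]; linarith) mf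
  rw [← volume_pi, intf] at grid
  have hvp : v ^ (1 + 1 / ((m+1 : ℕ):ℝ)) = v * 2⁻¹ := by
    rw [ENNReal.rpow_add _ _ (by rw [hv']; simp) vt, ENNReal.rpow_one]
    congr 1
    rw [hv', ENNReal.inv_pow, ← ENNReal.rpow_natCast, ← ENNReal.rpow_mul,
      mul_one_div_cancel (by positivity), ENNReal.rpow_one]
  have grid2 : ∫⁻ x, f x * ∏ i, l i x ^ (1 / ((m+1 : ℕ):ℝ)) ≤ v * 2⁻¹ := by
    rw [← hvp]
    refine le_trans (le_of_eq ?_) grid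
    congr 1; ext x
    congr 1
    by_cases hx : x ∈ posV K
    · simp [hf, hx]
    · simp only [hf, Set.indicator_of_notMem hx]
      rw [ENNReal.zero_rpow_of_pos]
      simp only [Fintype.card_fin]
      rw [mul_one_div, sub_pos, div_lt_one (by positivity)]; linarith
  have inv_int : ∀ i, ∫⁻ x, f x * (l i x)⁻¹ ≤ volume (secV K i 0) := by
    intro i
    rw [fub' i (φ := fun x => f x * (l i x)⁻¹) (mf.mul (ml i).inv),
      ← lintegral_indicator_one (secV_meas hK i 0)]
    apply lintegral_mono
    intro y
    simp only
    have e : ∀ t, l i (i.insertNth t y) = ∫⁻ u, f (i.insertNth u y) := by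
      intro t
      simp only [hl, Fin.update_insertNth]
    simp_rw [e]
    rw [lintegral_mul_const _ (by exact mf.comp ((ins_meas i).comp measurable_prodMk_right))]
    by_cases hy : y ∈ secV K i 0
    · rw [Set.indicator_of_mem hy]
      exact ENNReal.mul_inv_le_one _
    · have : ∀ u, f (i.insertNth u y) = 0 := by
        intro u
        rw [hf, Set.indicator_of_notMem]
        intro h
        have h' := (ins_posV i).1 h
        exact hy (sec_anti hconv hunc i h'.1.le h'.2)
      simp [this]
  have pt : ∀ x, 4 * ((m+1 : ℕ):ENNReal) * f x ≤ ∑ i, f x * (l i x)⁻¹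
      + 4 * ((m+1 : ℕ):ENNReal) * (f x * ∏ i, l i x ^ (1 / ((m+1 : ℕ):ℝ))) := by
    intro x
    by_cases hx : x ∈ posV K
    · have hf1 : f x = 1 := by simp [hf, hx]
      rw [hf1]
      simp only [one_mul, mul_one]
      apply lw_point' (Nat.succ_pos m)
      · intro i
        have h1 : volume (Set.Ioc 0 (x i)) ≤ l i x := by
          rw [hl, ← lintegral_indicator_one measurableSet_Ioc]
          apply lintegral_mono
          intro t
          by_cases ht : t ∈ Set.Ioc 0 (x i)
          · rw [Set.indicator_of_mem ht]
            have hmem : Function.update x i t ∈ posV K := by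
              refine ⟨solid hconv hunc hx.1 ?_, ?_⟩
              · intro j
                by_cases h : j = i
                · subst h; simp [abs_of_pos ht.1, abs_of_pos (hx.2 j), ht.2]
                · simp [h]
              · intro j
                by_cases h : j = i
                · subst h; simp [ht.1]
                · simp [h, hx.2 j]
            simp only
            rw [hf, Set.indicator_of_mem hmem]
            exact le_rfl
          · rw [Set.indicator_of_notMem ht]; exact zero_le
        have h2 : 0 < volume (Set.Ioc 0 (x i)) := by simp [hx.2 i]
        exact (h2.trans_le h1).ne'
      · intro i
        have h1 : l i x ≤ volume (Set.Icc 0 R) := by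
          rw [hl, ← lintegral_indicator_one measurableSet_Icc]
          apply lintegral_mono
          intro t
          simp only
          by_cases ht : Function.update x i t ∈ posV K
          · rw [Set.indicator_of_mem (show t ∈ Set.Icc 0 R from ?_)]
            · simp [hf, ht]
            · have h1 := hR _ ht.1 i
              have h2 := ht.2 i
              simp at h1 h2
              exact ⟨h2.le, (le_abs_self _).trans h1⟩
          · rw [hf, Set.indicator_of_notMem ht]; exact zero_le
        exact ne_top_of_le_ne_top (by simp) h1
    · have hf0 : f x = 0 := by simp [hf, hx]
      simp [hf0]
  have int0 : ∫⁻ x, 4 * ((m+1 : ℕ):ENNReal) * f x ≤ ∫⁻ x, (∑ i, f x * (l i x)⁻¹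
      + 4 * ((m+1 : ℕ):ENNReal) * (f x * ∏ i, l i x ^ (1 / ((m+1 : ℕ):ℝ)))) := lintegral_mono pt
  have mprod : Measurable fun x => f x * ∏ i, l i x ^ (1 / ((m+1 : ℕ):ℝ)) :=
    mf.mul (Finset.measurable_prod _ fun i _ => (ml i).pow_const _)
  rw [lintegral_const_mul _ mf, intf, lintegral_add_right _ (mprod.const_mul _),
    lintegral_finsetSum _ (fun i _ => by exact mf.mul (ml i).inv), lintegral_const_mul _ mprod] at int0
  have int2 : 4 * ((m+1 : ℕ):ENNReal) * v ≤ ∑ i, volume (secV K i 0)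
      + 4 * ((m+1 : ℕ):ENNReal) * (v * 2⁻¹) := by
    refine int0.trans ?_
    gcongr with i
    exact inv_int i
  by_contra hcon
  push Not at hcon
  have hlt : ∑ i, volume (secV K i 0) < ∑ i : Fin (m+1), 2 * v :=
    ENNReal.sum_lt_sum_of_nonempty (Finset.univ_nonempty) (fun i _ => hcon i)
  simp only [Finset.sum_const, Finset.card_univ, Fintype.card_fin, nsmul_eq_mul] at hlt
  have e4 : 4 * ((m+1 : ℕ):ENNReal) * (v * 2⁻¹) = ((m+1 : ℕ):ENNReal) * (2 * v) := by
    have : (4:ENNReal) * 2⁻¹ = 2 := by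
      rw [show (4:ENNReal) = 2 * 2 by norm_num, mul_assoc, ENNReal.mul_inv_cancel (by simp) (by simp),
        mul_one]
    calc _ = (4 * 2⁻¹) * (((m+1 : ℕ):ENNReal) * v) := by ring
      _ = _ := by rw [this]; ring
  have e5 : 4 * ((m+1 : ℕ):ENNReal) * v = ((m+1 : ℕ):ENNReal) * (2 * v) + ((m+1 : ℕ):ENNReal) * (2 * v) := by
    ring
  rw [e4, e5] at int2
  have fin : ((m+1 : ℕ):ENNReal) * (2 * v) ≠ ⊤ :=
    ENNReal.mul_ne_top (by simp) (ENNReal.mul_ne_top (by simp) vt)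
  have := (ENNReal.add_le_add_iff_right fin).1 int2
  exact absurd hlt (not_lt.2 this)

end Main
section Cone
open scoped Pointwise

def coneD {m : ℕ} (K : Set (Fin (m+1) → ℝ)) (α : Fin (m+1) → ℝ) (i : Fin (m+1)) :
    Set (Fin (m+1) → ℝ) :=
  posV K ∩ ({x | x i < α i} ∩ ⋂ j : Fin m, {x | x i * α (i.succAbove j) < x (i.succAbove j) * α i})

lemma coneD_meas {m : ℕ} {K : Set (Fin (m+1) → ℝ)} (hK : MeasurableSet K) (α : Fin (m+1) → ℝ)
    (i : Fin (m+1)) : MeasurableSet (coneD K α i) := by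
  refine (posV_meas hK).inter (MeasurableSet.inter ?_ (MeasurableSet.iInter fun j => ?_))
  · exact measurableSet_lt (measurable_pi_apply i) measurable_const
  · exact measurableSet_lt ((measurable_pi_apply i).mul_const _)
      ((measurable_pi_apply _).mul_const _)

lemma lint_pow {m : ℕ} {a : ℝ} (ha : 0 < a) :
    ∫⁻ t in Set.Ioo 0 a, ENNReal.ofReal ((1 - t / a) ^ m) = ENNReal.ofReal (a / (m+1)) := by
  have hc : Continuous fun t : ℝ => (1 - t / a) ^ m := by fun_prop
  have e : ∫ t in Set.Ioo 0 a, (1 - t / a) ^ m = a / (m+1) := by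
    rw [← integral_Ioc_eq_integral_Ioo, ← intervalIntegral.integral_of_le ha.le]
    rw [intervalIntegral.integral_eq_sub_of_hasDerivAt
      (f := fun t => - (a / (m+1)) * (1 - t / a) ^ (m+1))]
    · simp [ha.ne']
    · intro t _
      have h1 : HasDerivAt (fun t : ℝ => 1 - t / a) (- (1 / a)) t := by
        simpa using ((hasDerivAt_id t).div_const a).const_sub 1
      have := (h1.pow (m+1)).const_mul (-(a / (m+1)))
      have hm : (m:ℝ) + 1 ≠ 0 := by positivity
      have e : -(a / ((m:ℝ) + 1)) * (((m + 1 : ℕ):ℝ) * (1 - t / a) ^ (m + 1 - 1) * -(1 / a))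
          = (1 - t / a) ^ m := by
        rw [Nat.add_sub_cancel]
        push_cast
        field_simp
      rw [e] at this
      exact this
    · exact hc.intervalIntegrable _ _
  rw [← e, ofReal_integral_eq_lintegral_ofReal]
  · exact (hc.integrableOn_Icc (a := 0) (b := a)).mono_set Set.Ioo_subset_Icc_self
  · rw [Filter.EventuallyLE, ae_restrict_iff' measurableSet_Ioo]
    apply ae_of_all
    intro t ht
    have : t / a ≤ 1 := by rw [div_le_one ha]; exact ht.2.le
    exact pow_nonneg (by linarith) _

lemma cone_vol {m : ℕ} {K : Set (Fin (m+1) → ℝ)} (hK : MeasurableSet K) (hconv : Convex ℝ K)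
    {α : Fin (m+1) → ℝ} (hα : α ∈ K) (h0 : ∀ i, 0 ≤ α i) (i : Fin (m+1)) :
    ENNReal.ofReal (α i / (m+1)) * volume (secV K i 0) ≤ volume (coneD K α i) := by
  rcases (h0 i).eq_or_lt with h | hi
  · rw [← h]; simp
  have hc : Continuous fun t : ℝ => (1 - t / α i) ^ m := by fun_prop
  rw [← lint_pow hi, ← lintegral_mul_const _ (by exact hc.measurable.ennreal_ofReal),
    ← lintegral_indicator_one (coneD_meas hK α i),
    fub i (measurable_one.indicator (coneD_meas hK α i)), ← lintegral_indicator measurableSet_Ioo]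
  apply lintegral_mono
  intro t
  simp only
  by_cases ht : t ∈ Set.Ioo 0 (α i)
  swap
  · rw [Set.indicator_of_notMem ht]; exact zero_le
  rw [Set.indicator_of_mem ht]
  set c := t / α i with hcdef
  have c0 : 0 < c := div_pos ht.1 hi
  have c1 : c < 1 := (div_lt_one hi).2 ht.2
  have ct : c * α i = t := by rw [hcdef]; field_simp
  have mE : MeasurableSet {y : Fin m → ℝ | (i.insertNth t y : Fin (m+1) → ℝ) ∈ coneD K α i} :=
    (ins_meas i).comp (measurable_prodMk_left (x := t)) (coneD_meas hK α i)
  have e1 : ∫⁻ y : Fin m → ℝ, (coneD K α i).indicator 1 (i.insertNth t y : Fin (m+1) → ℝ)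
      = volume {y : Fin m → ℝ | (i.insertNth t y : Fin (m+1) → ℝ) ∈ coneD K α i} := by
    rw [← lintegral_indicator_one mE]
    rfl
  have e2 : volume ((c • fun j => α (i.succAbove j)) +ᵥ ((1 - c) • secV K i 0))
      = ENNReal.ofReal ((1 - c) ^ m) * volume (secV K i 0) := by
    rw [measure_vadd, Measure.addHaar_smul]
    simp only [Module.finrank_fintype_fun_eq_card, Fintype.card_fin]
    rw [abs_of_nonneg (pow_nonneg (by linarith) _)]
  rw [e1, ← e2]
  apply measure_mono
  rintro _ ⟨_, ⟨z, hz, rfl⟩, rfl⟩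
  have hαi : (i.insertNth (α i) (fun j => α (i.succAbove j)) : Fin (m+1) → ℝ) = α := by
    ext j
    refine Fin.succAboveCases i ?_ (fun j => ?_) j <;> simp
  have k := convex_ins hconv i c0.le (b := 1 - c) (by linarith) (by ring)
    (t := α i) (x := fun j => α (i.succAbove j)) (by rw [hαi]; exact hα) hz.2
  rw [mul_zero, add_zero, ct] at k
  have hpos : ∀ j, 0 < (1 - c) * z j := fun j => mul_pos (by linarith) (hz.1 j)
  have hp2 : ∀ j, 0 ≤ c * α (i.succAbove j) := fun j => mul_nonneg c0.le (h0 _)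
  show (i.insertNth t (fun j => c * α (i.succAbove j) + (1 - c) * z j) : Fin (m+1) → ℝ)
    ∈ coneD K α i
  refine ⟨(ins_posV i).2 ⟨ht.1, ?_, k⟩, ?_, ?_⟩
  · intro j; have := hpos j; have := hp2 j; simp only; linarith
  · simpa using ht.2
  · simp only [Set.mem_iInter]
    intro j
    simp only [Set.mem_ofPred_eq, Fin.insertNth_apply_same, Fin.insertNth_apply_succAbove]
    have := mul_pos (hpos j) hi
    rw [← ct]
    nlinarith

lemma cone_sum {m : ℕ} {K : Set (Fin (m+1) → ℝ)} (hK : MeasurableSet K) (hconv : Convex ℝ K)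
    {α : Fin (m+1) → ℝ} (hα : α ∈ K) (h0 : ∀ i, 0 ≤ α i) :
    ∑ i, ENNReal.ofReal (α i / (m+1)) * volume (secV K i 0) ≤ volume (posV K) := by
  calc _ ≤ ∑ i, volume (coneD K α i) := Finset.sum_le_sum fun i _ => cone_vol hK hconv hα h0 i
    _ = volume (⋃ i, coneD K α i) := by
      rw [measure_iUnion _ (coneD_meas hK α), tsum_fintype]
      intro i k hik
      rw [Function.onFun, Set.disjoint_left]
      intro x hx hx'
      obtain ⟨j, hj⟩ := Fin.exists_succAbove_eq hik
      obtain ⟨j', hj'⟩ := Fin.exists_succAbove_eq hik.symm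
      have h1 := Set.mem_iInter.1 hx.2.2 j'
      have h2 := Set.mem_iInter.1 hx'.2.2 j
      simp only [Set.mem_ofPred_eq, hj, hj'] at h1 h2
      linarith
    _ ≤ _ := measure_mono (Set.iUnion_subset fun i => Set.inter_subset_left)

end Cone
section Final

lemma l1_bound {m : ℕ} {K : Set (Fin (m+1) → ℝ)} (hconv : Convex ℝ K) (hcomp : IsCompact K)
    (hvol : volume K = 1)
    (hunc : ∀ x ∈ K, ∀ ε : Fin (m+1) → ℝ, (∀ i, ε i = 1 ∨ ε i = -1) → (fun i => ε i * x i) ∈ K)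
    (LK : ℝ)
    (hiso : ∀ θ : Fin (m+1) → ℝ, ∑ i, (θ i) ^ 2 = 1 →
      ∫ x in K, (∑ i, x i * θ i) ^ 2 = LK ^ 2) :
    ∀ x ∈ K, ∑ i, |x i| ≤ (Real.sqrt 6 / 2) * ((m+1 : ℕ) : ℝ) := by
  have hK : MeasurableSet K := hcomp.measurableSet
  obtain ⟨R, hR0, hR⟩ : ∃ R : ℝ, 0 ≤ R ∧ ∀ x ∈ K, ∀ i, |x i| ≤ R := by
    obtain ⟨R, hR⟩ := hcomp.isBounded.subset_closedBall 0
    refine ⟨max R 0, le_max_right _ _, fun x hx i => ?_⟩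
    have h1 : ‖x‖ ≤ R := by simpa using hR hx
    have h2 := norm_le_pi_norm x i
    rw [Real.norm_eq_abs] at h2
    exact (h2.trans h1).trans (le_max_left _ _)
  have hv1 : 2 ^ (m+1) * volume (posV K) = 1 := by
    have := signs hK hunc (φ := fun _ => 1) measurable_const (fun _ _ _ => rfl)
    simp only [lintegral_const, one_mul, Measure.restrict_apply MeasurableSet.univ,
      Set.univ_inter] at this
    rw [← this, hvol]
  have vt : volume (posV K) ≠ ⊤ := ne_top_of_le_ne_top (by rw [hvol]; simp)
    (measure_mono (μ := volume) (fun x hx => hx.1 : posV K ⊆ K))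
  have v0 : volume (posV K) ≠ 0 := by intro h; rw [h] at hv1; simp at hv1
  set v := (volume (posV K)).toReal with hv
  have vpos : 0 < v := ENNReal.toReal_pos v0 vt
  set g : Fin (m+1) → ℝ → ℝ := fun i t => (volume (secV K i t)).toReal with hg
  have mg : ∀ i, Measurable (g i) := fun i => (sec_vol_meas hK i).ennreal_toReal
  have g0 : ∀ i t, 0 ≤ g i t := fun i t => ENNReal.toReal_nonneg
  have gs : ∀ i t, 0 < t → g i t ≤ g i 0 := fun i t ht =>
    ENNReal.toReal_mono (sec_fin hK hR i 0) (measure_mono (sec_anti hconv hunc i ht.le))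
  have gR : ∀ i t, R < t → g i t = 0 := by
    intro i t ht
    have : secV K i t = ∅ := by
      ext y
      simp only [Set.mem_empty_iff_false, iff_false]
      intro hy
      have := hR _ hy.2 i
      simp at this
      linarith [le_abs_self t]
    simp [hg, this]
  have lc : ∀ i, ∀ a b t : ℝ, 0 < a → 0 < b → a + b = 1 → 0 < t →
      g i 0 ^ a * g i t ^ b ≤ g i (b * t) := by
    intro i a b t ha hb hab ht
    have := sec_logconc hK hconv hunc hR0 hR i ha hb hab le_rfl ht.le
    rw [mul_zero, zero_add] at this
    have := ENNReal.toReal_mono (sec_fin hK hR i _) this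
    rwa [ENNReal.toReal_mul, ← ENNReal.toReal_rpow, ← ENNReal.toReal_rpow] at this
  have gint : ∀ i, ∫ t in Set.Ioi 0, g i t = v := by
    intro i
    rw [hg]
    simp only
    rw [integral_toReal (sec_vol_meas hK i).aemeasurable
      (ae_of_all _ fun t => (sec_fin hK hR i t).lt_top)]
    have := slice hK i (w := fun _ => 1) measurable_const
    simp only [one_mul, lintegral_const, Measure.restrict_apply MeasurableSet.univ,
      Set.univ_inter] at this
    rw [← this]
  have gmom : ∀ i, ∫ t in Set.Ioi 0, t ^ 2 * g i t = LK ^ 2 / 2 ^ (m+1) := by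
    intro i
    have mw : Measurable fun t : ℝ => ENNReal.ofReal (t ^ 2) := by fun_prop
    have e1 : ∀ t : ℝ, t ^ 2 * g i t = (ENNReal.ofReal (t ^ 2) * volume (secV K i t)).toReal := by
      intro t
      rw [ENNReal.toReal_mul, ENNReal.toReal_ofReal (sq_nonneg t)]
    simp_rw [e1]
    rw [integral_toReal (by exact (mw.mul (sec_vol_meas hK i)).aemeasurable)
      (ae_of_all _ fun t => ENNReal.mul_lt_top ENNReal.ofReal_lt_top (sec_fin hK hR i t).lt_top),
      ← slice hK i mw]
    have h1 := hiso (Pi.single i 1) (by simp [Pi.single_apply])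
    have h2 : ∀ x : Fin (m+1) → ℝ, ∑ j, x j * (Pi.single i 1 : Fin (m+1) → ℝ) j = x i := by
      intro x; simp [Pi.single_apply]
    simp_rw [h2] at h1
    rw [integral_eq_lintegral_of_nonneg_ae (ae_of_all _ fun x => sq_nonneg _)
      (by exact ((measurable_pi_apply i).pow_const 2).aestronglyMeasurable),
      signs hK hunc (φ := fun x => ENNReal.ofReal (x i ^ 2))
        (by exact mw.comp (measurable_pi_apply i)) (by
        intro x ε hε
        simp only
        rcases hε i with h | h <;> rw [h] <;> simp), ENNReal.toReal_mul] at h1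
    rw [← h1]
    simp
  obtain ⟨k, hk⟩ := loomis hK hconv hunc hR hv1
  have hk' : 2 * v ≤ g k 0 := by
    have := ENNReal.toReal_mono (sec_fin hK hR k 0) hk
    simpa [ENNReal.toReal_mul] using this
  have mu := moment_upper (mg k) vpos (g0 k) (gs k) (gR k) (lc k) (gint k) hk'
  rw [gmom k] at mu
  have ml : ∀ i, 2 * v ^ 2 ≤ 3 * (g i 0) ^ 2 := fun i =>
    moment_lower (mg i) vpos (g0 i 0) (g0 i) (gs i) (gR i) (gint i) (by rw [gmom i]; exact mu)
  have s6 : Real.sqrt 6 ^ 2 = 6 := Real.sq_sqrt (by norm_num)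
  have s60 : 0 < Real.sqrt 6 := Real.sqrt_pos.2 (by norm_num)
  have ml' : ∀ i, v ≤ Real.sqrt 6 / 2 * g i 0 := by
    intro i
    refine (le_abs_self _).trans (abs_le_of_sq_le_sq ?_ ?_)
    · have := ml i
      rw [mul_pow, div_pow, s6]; linarith
    · have := g0 i 0; positivity
  intro x hx
  have hα : (fun i => |x i|) ∈ K := solid hconv hunc hx (fun i => by simp)
  have cs := cone_sum hK hconv hα (fun i => abs_nonneg _)
  have cs' := ENNReal.toReal_mono vt cs
  rw [ENNReal.toReal_sum (fun i _ => ENNReal.mul_ne_top ENNReal.ofReal_ne_top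
    (sec_fin hK hR i 0))] at cs'
  have hm : (0:ℝ) < (m:ℝ) + 1 := by positivity
  have e : ∀ i, (ENNReal.ofReal (|x i| / (m+1)) * volume (secV K i 0)).toReal
      = |x i| / (m+1) * g i 0 := by
    intro i
    rw [ENNReal.toReal_mul, ENNReal.toReal_ofReal (by positivity)]
  simp_rw [e] at cs'
  have fin : ∑ i, |x i| / (m+1) * v ≤ Real.sqrt 6 / 2 * v := by
    calc _ ≤ ∑ i, Real.sqrt 6 / 2 * (|x i| / (m+1) * g i 0) := by
          apply Finset.sum_le_sum
          intro i _
          have h1 : 0 ≤ |x i| / ((m:ℝ)+1) := by positivity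
          calc _ ≤ |x i| / (m+1) * (Real.sqrt 6 / 2 * g i 0) := by gcongr; exact ml' i
            _ = _ := by ring
      _ = Real.sqrt 6 / 2 * ∑ i, (|x i| / (m+1) * g i 0) := by rw [Finset.mul_sum]
      _ ≤ _ := by gcongr
  rw [← Finset.sum_mul, ← Finset.sum_div] at fin
  have := le_of_mul_le_mul_right fin vpos
  rw [div_le_iff₀ hm] at this
  push_cast
  exact this

end Final

/-- An isotropic unconditional convex body `K ⊂ ℝⁿ` satisfies
`K ⊆ (√6/2)·n·B₁ⁿ`, and consequently every convex body `L ⊆ K` containing the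
origin satisfies `(1/|L|)·∫_L ‖x‖₁ dx ≤ (√6/2)·n`. -/
theorem unconditional_body_in_scaled_l1_ball (n : ℕ) (hn : 1 ≤ n)
    (K : Set (Fin n → ℝ)) (hconv : Convex ℝ K) (hcomp : IsCompact K)
    (hint : (interior K).Nonempty) (hvol : volume K = 1)
    (huncond : ∀ x ∈ K, ∀ ε : Fin n → ℝ, (∀ i, ε i = 1 ∨ ε i = -1) →
      (fun i => ε i * x i) ∈ K)
    (LK : ℝ)
    (hiso : ∀ θ : Fin n → ℝ, ∑ i, (θ i) ^ 2 = 1 →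
      ∫ x in K, (∑ i, x i * θ i) ^ 2 = LK ^ 2) :
    (∀ x ∈ K, ∑ i, |x i| ≤ (Real.sqrt 6 / 2) * n) ∧
    (∀ L : Set (Fin n → ℝ), Convex ℝ L → IsCompact L → (interior L).Nonempty →
      L ⊆ K → (0 : Fin n → ℝ) ∈ L →
      (volume L).toReal⁻¹ * ∫ x in L, ∑ i, |x i| ≤ (Real.sqrt 6 / 2) * n) := by
  obtain ⟨m, rfl⟩ : ∃ m, n = m + 1 := ⟨n - 1, by omega⟩
  have key := l1_bound hconv hcomp hvol huncond LK hiso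
  refine ⟨key, ?_⟩
  intro L _ hLc hLi hLK _
  have ht : volume L ≠ ⊤ := hLc.measure_lt_top.ne
  have h0 : 0 < volume L :=
    (isOpen_interior.measure_pos volume hLi).trans_le (measure_mono interior_subset)
  have hp : 0 < (volume L).toReal := ENNReal.toReal_pos h0.ne' ht
  have hc : Continuous fun x : Fin (m+1) → ℝ => ∑ i, |x i| := by fun_prop
  have hle : ∫ x in L, ∑ i, |x i| ≤ ∫ x in L, (Real.sqrt 6 / 2) * ((m+1 : ℕ) : ℝ) := by
    apply setIntegral_mono_on (hc.continuousOn.integrableOn_compact hLc)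
      (continuousOn_const.integrableOn_compact hLc) hLc.measurableSet
    intro x hx
    exact key x (hLK hx)
  rw [setIntegral_const, smul_eq_mul] at hle
  rw [inv_mul_le_iff₀ hp]
  exact hle
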